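/- Let N ≥ 3 and α ∈ (0, N), and let F satisfy |F(s)| ≤ C(|s|^(1+α/N) + |s|^((N+α)/(N-2))). Then for u ∈ H¹(ℝ^N), with ‖u‖²_{H¹} = ∫(|∇u|²+|u|²), the Riesz-potential energy satisfies ∫_{ℝ^N}(I_α*F(u))F(u) ≤ C'( (∫|u|²)^(1+α/N) + (∫|∇u|²)^((N+α)/(N-2)) ). Consequently there exists δ > 0 such that ‖u‖²_{H¹} ≤ δ implies ∫(I_α*F(u))F(u) ≤ ¼‖u‖²_{H¹}, and hence I(u) ≥ ¼‖u‖²_{H¹}. -/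

import Mathlib

open MeasureTheory

/-!
The Hardy–Littlewood–Sobolev inequality bounds `∫∫ |x - y|^(α - d) f(y) f(x)` by a multiple of
`(∫ f^p)^(1 + α/d)` with `p = 2d/(d + α)`. By symmetry it suffices to integrate over
`f(y) ≤ f(x)`. For fixed `x`, the part `|x - y| < R` of the inner integral is then controlled by
the height `f(x)` and the rest by Hölder's inequality; the optimal `R` leaves a multiple of
`(∫ f^p)^(α/d) f(x)^p`, which is integrated in `x`.

For `f = |F(u)|` the growth bound turns `∫ f^p` into `∫ |u|² + ∫ |u|^(2d/(d-2))`, and the Sobolev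
inequality, extended from `C¹` functions of compact support to all differentiable `u` with `u` and
`∇u` in `L²` by cutoff and mollification, bounds the second integral by a power of `∫ |∇u|²`. Both
resulting exponents exceed `1`, so near the origin the nonlocal term is absorbed by the
quadratic one.
-/

namespace Choquard

open Filter Module Topology Set Metric
open scoped ENNReal NNReal Convolution Pointwise

section Sobolev

variable {E : Type*} [NormedAddCommGroup E] [NormedSpace ℝ E] [FiniteDimensional ℝ E]
  {G : Type*} [NormedAddCommGroup G] [NormedSpace ℝ G]
  {H : Type*} [NormedAddCommGroup H] [InnerProductSpace ℝ H]

theorem exists_contDiff_cutoff (R : ℝ) {ε : ℝ} (hε : 0 < ε) :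
    ∃ χ : E → ℝ, ContDiff ℝ 1 χ ∧ HasCompactSupport χ ∧ (∀ x, ‖χ x‖ ≤ 1) ∧
      (∀ x, ‖fderiv ℝ χ x‖ ≤ ε) ∧ ∀ x, ‖x‖ ≤ R → χ x = 1 := by
  let φ : ContDiffBump (0 : E) := ⟨1, 2, one_pos, one_lt_two⟩
  have hφ : ContDiff ℝ 1 φ := φ.contDiff
  obtain ⟨M, hM⟩ := (hφ.continuous_fderiv one_ne_zero).bounded_above_of_compact_support
    (φ.hasCompactSupport.fderiv (𝕜 := ℝ))
  have small (c : ℝ) {b : ℝ} (hb : 0 < b) : ∀ᶠ k in 𝓝[>] (0 : ℝ), k * c ≤ b :=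
    (((continuous_mul_const c).tendsto' 0 0 (zero_mul c)).mono_left nhdsWithin_le_nhds
      ).eventually_le_const hb
  obtain ⟨k, hk, hkM, hkR⟩ : ∃ k : ℝ, 0 < k ∧ k * M ≤ ε ∧ k * R ≤ 1 :=
    (eventually_mem_nhdsWithin.and ((small M hε).and (small R one_pos))).exists
  refine ⟨fun x => φ (k • x), by fun_prop, φ.hasCompactSupport.comp_smul hk.ne',
    fun x => ?_, fun x => ?_, fun x hx => ?_⟩
  · rw [Real.norm_of_nonneg φ.nonneg]
    exact φ.le_one
  · rw [fderiv_comp_smul, norm_smul, Real.norm_of_nonneg hk.le]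
    exact (mul_le_mul_of_nonneg_left (hM _) hk.le).trans hkM
  · refine φ.one_of_mem_closedBall (mem_closedBall_zero_iff.2 ?_)
    rw [norm_smul, Real.norm_of_nonneg hk.le]
    exact (mul_le_mul_of_nonneg_left hx hk.le).trans hkR

variable [MeasurableSpace E] [BorelSpace E] {μ : Measure E}

theorem eLpNorm_fderiv_smul_le {χ : E → ℝ} (hχ : ContDiff ℝ 1 χ) (hχ_le : ∀ x, ‖χ x‖ ≤ 1)
    {ε : ℝ} (hχ' : ∀ x, ‖fderiv ℝ χ x‖ ≤ ε) {u : E → G} (hu : ContDiff ℝ 1 u)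
    {p : ℝ≥0∞} (hp : 1 ≤ p) :
    eLpNorm (fderiv ℝ fun x => χ x • u x) p μ ≤
      eLpNorm (fderiv ℝ u) p μ + ENNReal.ofReal ε * eLpNorm u p μ := by
  have hχ'_cont : Continuous (fderiv ℝ χ) := hχ.continuous_fderiv one_ne_zero
  have hu'_cont : Continuous (fderiv ℝ u) := hu.continuous_fderiv one_ne_zero
  let A : E → E →L[ℝ] G := fun x => χ x • fderiv ℝ u x
  let B : E → E →L[ℝ] G := fun x => (fderiv ℝ χ x).smulRight (u x)
  have leibniz : (fderiv ℝ fun x => χ x • u x) = A + B :=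
    funext fun x => fderiv_fun_smul (hχ.differentiable one_ne_zero x)
      (hu.differentiable one_ne_zero x)
  have hA : Continuous A := hχ.continuous.smul hu'_cont
  have hB : Continuous B :=
    ((ContinuousLinearMap.smulRightL ℝ E G).continuous.comp hχ'_cont).clm_apply hu.continuous
  have A_le (x : E) : ‖A x‖ ≤ ‖fderiv ℝ u x‖ :=
    (norm_smul_le (χ x) (fderiv ℝ u x)).trans
      (mul_le_of_le_one_left (norm_nonneg _) (hχ_le x))
  have B_le (x : E) : ‖B x‖ ≤ ε * ‖u x‖ :=
    (ContinuousLinearMap.norm_smulRight_apply _ _).trans_le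
      (mul_le_mul_of_nonneg_right (hχ' x) (norm_nonneg _))
  rw [leibniz]
  exact (eLpNorm_add_le hA.aestronglyMeasurable hB.aestronglyMeasurable hp).trans
    (add_le_add (eLpNorm_mono A_le) (eLpNorm_le_mul_eLpNorm_of_ae_le_mul (.of_forall B_le) p))

theorem lintegral_rpow_lintegral_sub_le {X : Type*} [AddGroup X] [MeasurableSpace X]
    [MeasurableAdd₂ X] [MeasurableNeg X] {ρ ν : Measure X} [SFinite ρ] [ρ.IsAddRightInvariant]
    [IsProbabilityMeasure ν] {g : X → ℝ≥0∞} (hg : Measurable g) {p : ℝ} (hp : 1 ≤ p) :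
    ∫⁻ x, (∫⁻ t, g (x - t) ∂ν) ^ p ∂ρ ≤ ∫⁻ x, g x ^ p ∂ρ := by
  have hp₀ : 0 < p := one_pos.trans_le hp
  have jensen (x : X) : (∫⁻ t, g (x - t) ∂ν) ^ p ≤ ∫⁻ t, g (x - t) ^ p ∂ν := by
    have := eLpNorm'_le_eLpNorm'_of_exponent_le (μ := ν) (f := fun t => g (x - t)) one_pos hp
      (hg.comp (measurable_const.sub measurable_id)).aestronglyMeasurable
    simpa [eLpNorm', ENNReal.rpow_le_rpow_iff, ← ENNReal.rpow_mul, hp₀.ne'] using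
      ENNReal.rpow_le_rpow this hp₀.le
  calc ∫⁻ x, (∫⁻ t, g (x - t) ∂ν) ^ p ∂ρ
      ≤ ∫⁻ x, ∫⁻ t, g (x - t) ^ p ∂ν ∂ρ := lintegral_mono jensen
    _ = ∫⁻ t, ∫⁻ x, g (x - t) ^ p ∂ρ ∂ν := lintegral_lintegral_swap (by fun_prop)
    _ = ∫⁻ x, g x ^ p ∂ρ := by
      simp [lintegral_sub_right_eq_self (fun x => g x ^ p)]

variable [μ.IsAddHaarMeasure]

variable (μ) in
theorem eLpNorm_le_eLpNorm_fderiv_of_contDiff {u : E → H} (hu : ContDiff ℝ 1 u) {p p' : ℝ≥0}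
    (hp : 1 ≤ p) (hd : 0 < finrank ℝ E) (hp' : (p' : ℝ)⁻¹ = p⁻¹ - (finrank ℝ E : ℝ)⁻¹)
    (hup : MemLp u p μ) :
    eLpNorm u p' μ ≤ eLpNormLESNormFDerivOfEqInnerConst μ p * eLpNorm (fderiv ℝ u) p μ := by
  have approx {ε : ℝ} (hε : 0 < ε) : eLpNorm u p' μ ≤
      eLpNormLESNormFDerivOfEqInnerConst μ p *
        (eLpNorm (fderiv ℝ u) p μ + ENNReal.ofReal ε * eLpNorm u p μ) := by
    choose χ hχ hχc hχ_le hχ' hχ_one using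
      fun n : ℕ => exists_contDiff_cutoff (E := E) n hε
    refine Lp.eLpNorm_le_of_ae_tendsto (u := atTop) (f := fun n x => χ n x • u x)
      (.of_forall fun n => ?_) (fun n => ?_) (.of_forall fun x => ?_)
    · refine (eLpNorm_le_eLpNorm_fderiv_of_eq_inner μ ((hχ n).smul hu) (hχc n).smul_right hp hd
        hp').trans ?_
      gcongr
      exact eLpNorm_fderiv_smul_le (hχ n) (hχ_le n) (hχ' n) hu
        (by exact_mod_cast hp)
    · exact ((hχ n).continuous.smul hu.continuous).aestronglyMeasurable
    · obtain ⟨n₀, hn₀⟩ := exists_nat_ge ‖x‖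
      refine tendsto_const_nhds.congr' ?_
      filter_upwards [eventually_ge_atTop n₀] with n hn
      rw [hχ_one n x (hn₀.trans (by exact_mod_cast hn)), one_smul]
  have limit : Tendsto (fun ε : ℝ => eLpNormLESNormFDerivOfEqInnerConst μ p *
      (eLpNorm (fderiv ℝ u) p μ + ENNReal.ofReal ε * eLpNorm u p μ)) (𝓝[>] 0)
      (𝓝 (eLpNormLESNormFDerivOfEqInnerConst μ p * eLpNorm (fderiv ℝ u) p μ)) := by
    have hε : Tendsto ENNReal.ofReal (𝓝[>] 0) (𝓝 0) :=
      (ENNReal.continuous_ofReal.tendsto' 0 0 ENNReal.ofReal_zero).mono_left nhdsWithin_le_nhds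
    simpa using ENNReal.Tendsto.const_mul
      (tendsto_const_nhds.add (ENNReal.Tendsto.mul_const hε (.inr hup.eLpNorm_ne_top)))
      (.inr ENNReal.coe_ne_top)
  exact ge_of_tendsto limit (eventually_mem_nhdsWithin.mono fun _ => approx)

theorem eLpNorm_normed_convolution_le (φ : ContDiffBump (0 : E)) {g : E → G}
    (hg : AEStronglyMeasurable g μ) {p : ℝ≥0} (hp : 1 ≤ p) :
    eLpNorm (φ.normed μ ⋆[ContinuousLinearMap.lsmul ℝ ℝ, μ] g) p μ ≤ eLpNorm g p μ := by
  obtain ⟨h, hh, hgh⟩ := hg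
  rw [convolution_congr _ .rfl hgh, eLpNorm_congr_ae hgh]
  have hp₀ : (p : ℝ≥0∞) ≠ 0 := by exact_mod_cast (one_pos.trans_le hp).ne'
  have hφ : Measurable fun t => ENNReal.ofReal (φ.normed μ t) :=
    φ.continuous_normed.measurable.ennreal_ofReal
  have : IsProbabilityMeasure (μ.withDensity fun t => ENNReal.ofReal (φ.normed μ t)) := by
    refine ⟨?_⟩
    rw [withDensity_apply _ .univ, Measure.restrict_univ,
      ← ofReal_integral_eq_lintegral_ofReal φ.integrable_normed (.of_forall φ.nonneg_normed),
      φ.integral_normed, ENNReal.ofReal_one]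
  have pointwise (x : E) : ‖(φ.normed μ ⋆[ContinuousLinearMap.lsmul ℝ ℝ, μ] h) x‖ₑ ≤
      ∫⁻ t, ‖h (x - t)‖ₑ ∂μ.withDensity fun t => ENNReal.ofReal (φ.normed μ t) := by
    rw [lintegral_withDensity_eq_lintegral_mul (g := fun t => ‖h (x - t)‖ₑ) _ hφ
      (hh.enorm.comp (measurable_const.sub measurable_id))]
    refine (enorm_integral_le_lintegral_enorm _).trans_eq (lintegral_congr fun t => ?_)
    simp [enorm_smul, Real.enorm_of_nonneg (φ.nonneg_normed t)]
  rw [eLpNorm_eq_lintegral_rpow_enorm_toReal hp₀ ENNReal.coe_ne_top,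
    eLpNorm_eq_lintegral_rpow_enorm_toReal hp₀ ENNReal.coe_ne_top]
  refine ENNReal.rpow_le_rpow ?_ (by positivity)
  exact (lintegral_mono fun x => ENNReal.rpow_le_rpow (pointwise x) p.coe_nonneg).trans
    (lintegral_rpow_lintegral_sub_le hh.enorm hp)

theorem fderiv_convolution_of_differentiable {φ : E → ℝ}
    (hφc : HasCompactSupport φ) (hφ : ContDiff ℝ 1 φ) {u : E → G} (hu : Differentiable ℝ u)
    (hu' : LocallyIntegrable (fderiv ℝ u) μ) :
    fderiv ℝ (φ ⋆[ContinuousLinearMap.lsmul ℝ ℝ, μ] u) =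
      φ ⋆[ContinuousLinearMap.lsmul ℝ ℝ, μ] fderiv ℝ u := by
  have hu₀ : LocallyIntegrable u μ := hu.continuous.locallyIntegrable
  ext x v
  have int_deriv := hφc.fderiv (𝕜 := ℝ) |>.convolutionExists_left
    ((ContinuousLinearMap.lsmul ℝ ℝ).precompL E) (hφ.continuous_fderiv one_ne_zero) hu₀ x
  have int₀ := hφc.convolutionExists_left (ContinuousLinearMap.lsmul ℝ ℝ) hφ.continuous hu₀ x
  have int₁ := hφc.convolutionExists_left (ContinuousLinearMap.lsmul ℝ ℝ) hφ.continuous hu' x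
  have hu_sub (t : E) : HasFDerivAt (fun t => u (x - t)) (-fderiv ℝ u (x - t)) t := by
    simpa [Function.comp_def] using (hu (x - t)).hasFDerivAt.comp t ((hasFDerivAt_id t).const_sub x)
  have hu_sub' (t : E) : fderiv ℝ (fun t => u (x - t)) t v = -fderiv ℝ u (x - t) v := by
    rw [(hu_sub t).fderiv]; rfl
  calc fderiv ℝ (φ ⋆[ContinuousLinearMap.lsmul ℝ ℝ, μ] u) x v
      = ∫ t, fderiv ℝ φ t v • u (x - t) ∂μ := by
        rw [(hφc.hasFDerivAt_convolution_left _ hφ hu₀ x).fderiv, convolution,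
          ContinuousLinearMap.integral_apply int_deriv]
        rfl
    _ = -∫ t, φ t • fderiv ℝ (fun t => u (x - t)) t v ∂μ := by
        rw [integral_smul_fderiv_eq_neg_fderiv_smul_of_integrable, neg_neg]
        · exact int_deriv.apply_continuousLinearMap v
        · simpa only [hu_sub', smul_neg] using! (int₁.apply_continuousLinearMap v).neg
        · exact int₀
        · exact fun t _ => (hφ.differentiable one_ne_zero) t
        · exact fun t _ => (hu_sub t).differentiableAt
    _ = (φ ⋆[ContinuousLinearMap.lsmul ℝ ℝ, μ] fderiv ℝ u) x v := by
        rw [convolution, ContinuousLinearMap.integral_apply int₁]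
        simp [hu_sub', integral_neg]

variable (μ) in
theorem eLpNorm_le_eLpNorm_fderiv_of_differentiable [CompleteSpace H] {u : E → H}
    (hu : Differentiable ℝ u) {p p' : ℝ≥0} (hp : 1 ≤ p) (hd : 0 < finrank ℝ E)
    (hp' : (p' : ℝ)⁻¹ = p⁻¹ - (finrank ℝ E : ℝ)⁻¹) (hup : MemLp u p μ)
    (hu' : MemLp (fderiv ℝ u) p μ) :
    eLpNorm u p' μ ≤ eLpNormLESNormFDerivOfEqInnerConst μ p * eLpNorm (fderiv ℝ u) p μ := by
  let φ (n : ℕ) : ContDiffBump (0 : E) :=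
    ⟨1 / (n + 1), 2 / (n + 1), by positivity, by gcongr; norm_num⟩
  have hφ : Tendsto (fun n => (φ n).rOut) atTop (𝓝 0) := by
    simpa [φ, div_eq_mul_inv] using tendsto_one_div_add_atTop_nhds_zero_nat.const_mul (2 : ℝ)
  let v (n : ℕ) : E → H := (φ n).normed μ ⋆[ContinuousLinearMap.lsmul ℝ ℝ, μ] u
  have hv (n : ℕ) : ContDiff ℝ 1 (v n) :=
    (φ n).hasCompactSupport_normed.contDiff_convolution_left _ (φ n).contDiff_normed
      hu.continuous.locallyIntegrable
  have hu'_loc : LocallyIntegrable (fderiv ℝ u) μ := hu'.locallyIntegrable (by exact_mod_cast hp)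
  have hv_le (n : ℕ) : eLpNorm (v n) p μ ≤ eLpNorm u p μ :=
    eLpNorm_normed_convolution_le _ hu.continuous.aestronglyMeasurable hp
  refine Lp.eLpNorm_le_of_ae_tendsto (u := atTop) (f := v) (.of_forall fun n => ?_)
    (fun n => (hv n).continuous.aestronglyMeasurable)
    (.of_forall (ContDiffBump.convolution_tendsto_right_of_continuous hφ hu.continuous))
  calc eLpNorm (v n) p' μ
      ≤ eLpNormLESNormFDerivOfEqInnerConst μ p * eLpNorm (fderiv ℝ (v n)) p μ :=
        eLpNorm_le_eLpNorm_fderiv_of_contDiff μ (hv n) hp hd hp'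
          ⟨(hv n).continuous.aestronglyMeasurable, (hv_le n).trans_lt hup.2⟩
    _ ≤ eLpNormLESNormFDerivOfEqInnerConst μ p * eLpNorm (fderiv ℝ u) p μ := by
        rw [fderiv_convolution_of_differentiable (φ n).hasCompactSupport_normed
          (φ n).contDiff_normed hu hu'_loc]
        gcongr
        exact eLpNorm_normed_convolution_le _ hu'.1 hp

variable (μ) in
theorem exists_lintegral_enorm_rpow_le_fderiv [CompleteSpace H] {p : ℝ≥0} (hp : 1 ≤ p)
    (hpd : p < finrank ℝ E) :
    ∃ S : ℝ≥0, ∀ u : E → H, Differentiable ℝ u → MemLp u p μ → MemLp (fderiv ℝ u) p μ →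
      ∫⁻ x, ‖u x‖ₑ ^ (p * finrank ℝ E / (finrank ℝ E - p) : ℝ) ∂μ ≤
        S * (∫⁻ x, ‖fderiv ℝ u x‖ₑ ^ (p : ℝ) ∂μ) ^ (finrank ℝ E / (finrank ℝ E - p) : ℝ) := by
  have hp₀ : 0 < p := one_pos.trans_le hp
  have hpd' : (0 : ℝ) < finrank ℝ E - p := sub_pos.2 (by exact_mod_cast hpd)
  have hd : (0 : ℝ) < finrank ℝ E := hpd'.trans_le (sub_le_self _ p.coe_nonneg)
  obtain ⟨p', hp'⟩ : ∃ p' : ℝ≥0, (p' : ℝ) = p * finrank ℝ E / (finrank ℝ E - p) :=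
    CanLift.prf _ (by positivity)
  have hp'₀ : p' ≠ 0 := by
    rw [← NNReal.coe_ne_zero, hp']
    positivity
  have conjugate : (p' : ℝ)⁻¹ = p⁻¹ - (finrank ℝ E : ℝ)⁻¹ := by
    rw [hp', NNReal.coe_inv]
    field_simp
  have exponent : (p : ℝ) * (finrank ℝ E / (finrank ℝ E - p)) = p' := by rw [hp', mul_div_assoc]
  refine ⟨eLpNormLESNormFDerivOfEqInnerConst μ p ^ (p' : ℝ), fun u hu hup hu' => ?_⟩
  rw [← hp', ← eLpNorm_nnreal_pow_eq_lintegral hp'₀, ← eLpNorm_nnreal_pow_eq_lintegral hp₀.ne',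
    ← ENNReal.rpow_mul, exponent, ENNReal.coe_rpow_of_nonneg _ p'.coe_nonneg,
    ← ENNReal.mul_rpow_of_nonneg _ _ p'.coe_nonneg]
  gcongr
  exact eLpNorm_le_eLpNorm_fderiv_of_differentiable μ hu hp (Nat.cast_pos.1 hd) conjugate hup hu'

end Sobolev

section RieszPotential

variable {E : Type*} [NormedAddCommGroup E] [NormedSpace ℝ E] [FiniteDimensional ℝ E]
  [MeasurableSpace E] [BorelSpace E] {μ : Measure E} [μ.IsAddHaarMeasure]

theorem setLIntegral_smul_set_enorm_rpow {R : ℝ≥0} (hR : 0 < R) (A : Set E) (s : ℝ) :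
    ∫⁻ x in (R : ℝ) • A, ‖x‖ₑ ^ s ∂μ =
      (R : ℝ≥0∞) ^ (s + finrank ℝ E) * ∫⁻ x in A, ‖x‖ₑ ^ s ∂μ := by
  have hR' : (R : ℝ) ≠ 0 := by exact_mod_cast hR.ne'
  have hR₀ : (R : ℝ≥0∞) ≠ 0 := by exact_mod_cast hR.ne'
  have map_scale : (μ.restrict A).map ((R : ℝ) • ·) =
      ((R : ℝ≥0∞) ^ (-(finrank ℝ E : ℝ))) • μ.restrict ((R : ℝ) • A) := by
    have embedding : MeasurableEmbedding fun x : E => (R : ℝ) • x :=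
      (Homeomorph.smulOfNeZero _ hR').measurableEmbedding
    have scale_eq : ENNReal.ofReal |((R : ℝ) ^ finrank ℝ E)⁻¹| =
        (R : ℝ≥0∞) ^ (-(finrank ℝ E : ℝ)) := by
      rw [abs_of_nonneg (by positivity), ENNReal.ofReal_inv_of_pos (by positivity),
        ENNReal.ofReal_pow R.coe_nonneg, ENNReal.ofReal_coe_nnreal, ENNReal.rpow_neg,
        ENNReal.rpow_natCast]
    rw [← scale_eq, ← Measure.restrict_smul, ← Measure.map_addHaar_smul μ hR',
      embedding.restrict_map, ← image_smul, preimage_image_eq A embedding.injective]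
  have scaled : (R : ℝ≥0∞) ^ s * ∫⁻ x in A, ‖x‖ₑ ^ s ∂μ =
      (R : ℝ≥0∞) ^ (-(finrank ℝ E : ℝ)) * ∫⁻ x in (R : ℝ) • A, ‖x‖ₑ ^ s ∂μ := by
    rw [← smul_eq_mul _ (∫⁻ x in (R : ℝ) • A, _ ∂μ), ← lintegral_smul_measure, ← map_scale,
      lintegral_map (by fun_prop) (by fun_prop), ← lintegral_const_mul _ (by fun_prop)]
    refine lintegral_congr fun x => ?_
    rw [enorm_smul, Real.enorm_eq_ofReal R.coe_nonneg, ENNReal.ofReal_coe_nnreal,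
      ENNReal.mul_rpow_of_ne_top ENNReal.coe_ne_top enorm_ne_top]
  rw [ENNReal.rpow_add _ _ hR₀ ENNReal.coe_ne_top, mul_right_comm, scaled, mul_right_comm,
    ← ENNReal.rpow_add _ _ hR₀ ENNReal.coe_ne_top, neg_add_cancel, ENNReal.rpow_zero, one_mul]

theorem setLIntegral_ball_enorm_rpow {R : ℝ≥0} (hR : 0 < R) (s : ℝ) :
    ∫⁻ x in ball (0 : E) R, ‖x‖ₑ ^ s ∂μ =
      (R : ℝ≥0∞) ^ (s + finrank ℝ E) * ∫⁻ x in ball (0 : E) 1, ‖x‖ₑ ^ s ∂μ := by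
  rw [← smul_unitBall_of_pos (NNReal.coe_pos.2 hR), setLIntegral_smul_set_enorm_rpow hR]

theorem setLIntegral_compl_ball_enorm_rpow {R : ℝ≥0} (hR : 0 < R) (s : ℝ) :
    ∫⁻ x in (ball (0 : E) R)ᶜ, ‖x‖ₑ ^ s ∂μ =
      (R : ℝ≥0∞) ^ (s + finrank ℝ E) * ∫⁻ x in (ball (0 : E) 1)ᶜ, ‖x‖ₑ ^ s ∂μ := by
  have bijective : Function.Bijective fun x : E => (R : ℝ) • x :=
    (Homeomorph.smulOfNeZero (R : ℝ) (NNReal.coe_ne_zero.2 hR.ne')).bijective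
  rw [← smul_unitBall_of_pos (NNReal.coe_pos.2 hR), ← image_smul, ← image_compl_eq bijective,
    image_smul, setLIntegral_smul_set_enorm_rpow hR]

variable (μ) in
theorem setLIntegral_ball_enorm_rpow_ne_top (hd : 0 < finrank ℝ E) {s : ℝ}
    (hs : -(finrank ℝ E : ℝ) < s) : ∫⁻ x in ball (0 : E) 1, ‖x‖ₑ ^ s ∂μ ≠ ∞ := by
  have : Nontrivial E := nontrivial_of_finrank_pos hd
  have integrable : IntegrableOn (fun x : E => ‖x‖ ^ s) (ball 0 1) μ := by
    refine integrableOn_ball_of_norm_le_rpow hd (C := 1) (neg_lt.1 hs) (.of_forall fun x => ?_)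
      (measurable_norm.pow_const s).aestronglyMeasurable
    rw [Real.norm_of_nonneg (by positivity), one_mul, neg_neg]
  convert integrable.lintegral_lt_top.ne using 1
  refine setLIntegral_congr_fun_ae measurableSet_ball ?_
  filter_upwards [Measure.ae_ne μ 0] with x hx _
  rw [← ENNReal.ofReal_rpow_of_pos (norm_pos_iff.2 hx), ofReal_norm]

variable (μ) in
theorem setLIntegral_compl_ball_enorm_rpow_ne_top {s : ℝ}
    (hs : s < -(finrank ℝ E : ℝ)) : ∫⁻ x in (ball (0 : E) 1)ᶜ, ‖x‖ₑ ^ s ∂μ ≠ ∞ := by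
  have hs₀ : s ≤ 0 := hs.le.trans (by simp)
  have bound (x : E) (hx : x ∈ (ball (0 : E) 1)ᶜ) :
      ‖x‖ₑ ^ s ≤ ENNReal.ofReal (2 ^ (-s)) * ENNReal.ofReal ((1 + ‖x‖) ^ (-(-s))) := by
    have hx₁ : 1 ≤ ‖x‖ := by simpa using hx
    rw [← ofReal_norm, ENNReal.ofReal_rpow_of_pos (by positivity),
      ← ENNReal.ofReal_mul (by positivity), neg_neg]
    refine ENNReal.ofReal_le_ofReal ?_
    calc ‖x‖ ^ s = 2 ^ (-s) * (2 * ‖x‖) ^ s := by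
          rw [Real.mul_rpow two_pos.le (norm_nonneg x), ← mul_assoc, ← Real.rpow_add two_pos,
            neg_add_cancel, Real.rpow_zero, one_mul]
      _ ≤ 2 ^ (-s) * (1 + ‖x‖) ^ s := by
          gcongr ?_ * ?_
          exact Real.rpow_le_rpow_of_nonpos (by positivity) (by linarith) hs₀
  refine ((setLIntegral_mono' measurableSet_ball.compl bound).trans
    (setLIntegral_le_lintegral _ _)).trans_lt ?_ |>.ne
  rw [lintegral_const_mul _ (by fun_prop)]
  exact ENNReal.mul_lt_top ENNReal.ofReal_lt_top (finite_integral_one_add_norm (lt_neg.1 hs))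

theorem setLIntegral_ball_enorm_rpow_mul_le {R : ℝ≥0} (hR : 0 < R) (s : ℝ) {g : E → ℝ≥0∞}
    {t : ℝ≥0∞} (hgt : ∀ x, g x ≤ t) :
    ∫⁻ x in ball (0 : E) R, ‖x‖ₑ ^ s * g x ∂μ ≤
      (∫⁻ x in ball (0 : E) 1, ‖x‖ₑ ^ s ∂μ) * ((R : ℝ≥0∞) ^ (s + finrank ℝ E) * t) :=
  calc ∫⁻ x in ball (0 : E) R, ‖x‖ₑ ^ s * g x ∂μ
      ≤ ∫⁻ x in ball (0 : E) R, ‖x‖ₑ ^ s * t ∂μ := by gcongr with x; exact hgt x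
    _ = (∫⁻ x in ball (0 : E) 1, ‖x‖ₑ ^ s ∂μ) * ((R : ℝ≥0∞) ^ (s + finrank ℝ E) * t) := by
      rw [lintegral_mul_const _ (by fun_prop), setLIntegral_ball_enorm_rpow hR]
      ring

theorem setLIntegral_compl_ball_enorm_rpow_mul_le {p q : ℝ} (hpq : p.HolderConjugate q) {R : ℝ≥0}
    (hR : 0 < R) (s : ℝ) {g : E → ℝ≥0∞} (hg : Measurable g) :
    ∫⁻ x in (ball (0 : E) R)ᶜ, ‖x‖ₑ ^ s * g x ∂μ ≤
      (∫⁻ x in (ball (0 : E) 1)ᶜ, ‖x‖ₑ ^ (s * q) ∂μ) ^ (1 / q) *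
        ((R : ℝ≥0∞) ^ (s + finrank ℝ E / q) * (∫⁻ x, g x ^ p ∂μ) ^ (1 / p)) := by
  have hq := hpq.symm.pos
  have scaling : (s * q + finrank ℝ E) * (1 / q) = s + finrank ℝ E / q := by field_simp
  calc ∫⁻ x in (ball (0 : E) R)ᶜ, ‖x‖ₑ ^ s * g x ∂μ
      ≤ (∫⁻ x in (ball (0 : E) R)ᶜ, (‖x‖ₑ ^ s) ^ q ∂μ) ^ (1 / q) *
          (∫⁻ x in (ball (0 : E) R)ᶜ, g x ^ p ∂μ) ^ (1 / p) :=
        ENNReal.lintegral_mul_le_Lp_mul_Lq _ hpq.symm (by fun_prop) hg.aemeasurable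
    _ ≤ ((R : ℝ≥0∞) ^ (s * q + finrank ℝ E) *
          ∫⁻ x in (ball (0 : E) 1)ᶜ, ‖x‖ₑ ^ (s * q) ∂μ) ^ (1 / q) *
            (∫⁻ x, g x ^ p ∂μ) ^ (1 / p) := by
        simp only [← ENNReal.rpow_mul, setLIntegral_compl_ball_enorm_rpow hR]
        have := hpq.pos
        gcongr
        exact Measure.restrict_le_self
    _ = (∫⁻ x in (ball (0 : E) 1)ᶜ, ‖x‖ₑ ^ (s * q) ∂μ) ^ (1 / q) *
          ((R : ℝ≥0∞) ^ (s + finrank ℝ E / q) * (∫⁻ x, g x ^ p ∂μ) ^ (1 / p)) := by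
        rw [ENNReal.mul_rpow_of_nonneg _ _ (by positivity), ← ENNReal.rpow_mul, scaling]
        ring

variable (μ) in
theorem exists_lintegral_enorm_rpow_mul_le {α p : ℝ} (hα : 0 < α) (hd : 0 < finrank ℝ E)
    (hp : 1 < p) (hαp : α * p < finrank ℝ E) :
    ∃ c : ℝ≥0, ∀ g : E → ℝ≥0∞, Measurable g → ∀ t : ℝ≥0∞, (∀ x, g x ≤ t) → ∀ R : ℝ≥0, 0 < R →
      ∫⁻ x, ‖x‖ₑ ^ (α - finrank ℝ E) * g x ∂μ ≤ c * ((R : ℝ≥0∞) ^ α * t +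
        (R : ℝ≥0∞) ^ (α - finrank ℝ E / p) * (∫⁻ x, g x ^ p ∂μ) ^ (1 / p)) := by
  obtain ⟨q, hpq⟩ : ∃ q, p.HolderConjugate q := ⟨_, .conjExponent hp⟩
  set d : ℝ := (finrank ℝ E : ℝ)
  have hq := hpq.symm.pos
  have far_scaling : α - d + d / q = α - d / p := by
    linear_combination d * hpq.inv_add_inv_eq_one
  have far_exponent : (α - d) * q < -d := by
    have : α - d + d / q < 0 := by
      rw [far_scaling, sub_neg, lt_div_iff₀ hpq.pos]
      exact hαp
    rw [← lt_div_iff₀ hq, neg_div]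
    linarith
  set a := ∫⁻ x in ball (0 : E) 1, ‖x‖ₑ ^ (α - d) ∂μ
  set b := (∫⁻ x in (ball (0 : E) 1)ᶜ, ‖x‖ₑ ^ ((α - d) * q) ∂μ) ^ (1 / q) with hb
  have ha_top : a ≠ ∞ := setLIntegral_ball_enorm_rpow_ne_top μ hd (by linarith)
  have hb_top : b ≠ ∞ := ENNReal.rpow_ne_top_of_nonneg (by positivity)
    (setLIntegral_compl_ball_enorm_rpow_ne_top μ far_exponent)
  refine ⟨(a + b).toNNReal, fun g hg t hgt R hR => ?_⟩
  have near := setLIntegral_ball_enorm_rpow_mul_le (μ := μ) hR (α - d) hgt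
  have far := setLIntegral_compl_ball_enorm_rpow_mul_le (μ := μ) hpq hR (α - d) hg
  rw [sub_add_cancel] at near
  rw [far_scaling, ← hb] at far
  rw [ENNReal.coe_toNNReal (ENNReal.add_ne_top.2 ⟨ha_top, hb_top⟩),
    ← lintegral_add_compl _ measurableSet_ball (A := ball (0 : E) R), mul_add]
  grw [near, far]
  gcongr
  exacts [le_self_add, le_add_self]

theorem mul_rpow_balance {d α p : ℝ} (hd : d ≠ 0) (hp : p ≠ 0) (hdαp : p * (α / d) + p = 2)
    {A R t : ℝ≥0} (hR : R ≠ 0) (ht : t ≠ 0) (hA : A = R ^ d * t ^ p) :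
    t * (R ^ α * t + R ^ (α - d / p) * A ^ (1 / p)) = 2 * (A ^ (α / d) * t ^ p) := by
  have far_eq_near : R ^ (α - d / p) * A ^ (1 / p) = R ^ α * t := by
    rw [hA, NNReal.mul_rpow, ← NNReal.rpow_mul, ← NNReal.rpow_mul, mul_one_div_cancel hp,
      NNReal.rpow_one, ← mul_assoc, ← NNReal.rpow_add hR, mul_one_div, sub_add_cancel]
  have near_eq : t * (R ^ α * t) = A ^ (α / d) * t ^ p := by
    rw [hA, NNReal.mul_rpow, ← NNReal.rpow_mul, ← NNReal.rpow_mul, mul_assoc,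
      ← NNReal.rpow_add ht, hdαp, mul_div_cancel₀ _ hd, NNReal.rpow_two]
    ring
  rw [far_eq_near, ← near_eq]
  ring

variable (μ) in
theorem exists_mul_lintegral_enorm_rpow_mul_le {α : ℝ} (hα : 0 < α) (hα' : α < finrank ℝ E) :
    ∃ K : ℝ≥0, ∀ g : E → ℝ≥0∞, Measurable g → ∀ t : ℝ≥0∞, t ≠ ∞ → (∀ x, g x ≤ t) →
      ∀ A : ℝ≥0∞, A ≠ 0 → A ≠ ∞ →
        ∫⁻ x, g x ^ (2 * finrank ℝ E / (finrank ℝ E + α)) ∂μ ≤ A →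
      t * ∫⁻ x, ‖x‖ₑ ^ (α - finrank ℝ E) * g x ∂μ ≤
        K * (A ^ (α / finrank ℝ E) * t ^ (2 * finrank ℝ E / (finrank ℝ E + α))) := by
  set d : ℝ := (finrank ℝ E : ℝ)
  have hd : 0 < d := hα.trans hα'
  set p : ℝ := 2 * d / (d + α) with hp
  have hp_one : 1 < p := by rw [hp, one_lt_div (by positivity)]; linarith
  have hp₀ : 0 < p := one_pos.trans hp_one
  have hαp : α * p < d := by
    rw [hp, mul_div_assoc', div_lt_iff₀ (by positivity)]
    nlinarith
  have hdαp : p * (α / d) + p = 2 := by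
    rw [hp]
    field_simp
    ring
  obtain ⟨c, hc⟩ := exists_lintegral_enorm_rpow_mul_le μ hα (Nat.cast_pos.1 hd) hp_one hαp
  refine ⟨2 * c, fun g hg t ht hgt A hA₀ hA hgA => ?_⟩
  lift t to ℝ≥0 using ht
  lift A to ℝ≥0 using hA
  rcases eq_or_ne t 0 with rfl | ht₀
  · simp
  replace hA₀ : A ≠ 0 := by exact_mod_cast hA₀
  -- The radius at which the near and far contributions to the potential coincide.
  set R : ℝ≥0 := (A / t ^ p) ^ (1 / d) with hR
  have hR₀ : 0 < R := by positivity
  have balance : A = R ^ d * t ^ p := by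
    rw [hR, ← NNReal.rpow_mul, one_div_mul_cancel hd.ne', NNReal.rpow_one,
      div_mul_cancel₀ _ (by positivity)]
  calc (t : ℝ≥0∞) * ∫⁻ x, ‖x‖ₑ ^ (α - d) * g x ∂μ
      ≤ t * (c * ((R : ℝ≥0∞) ^ α * t + (R : ℝ≥0∞) ^ (α - d / p) * (A : ℝ≥0∞) ^ (1 / p))) := by
        grw [hc g hg t hgt R hR₀, hgA]
    _ = (c * (t * (R ^ α * t + R ^ (α - d / p) * A ^ (1 / p))) : ℝ≥0) := by
        push_cast [ENNReal.coe_rpow_of_ne_zero hR₀.ne', ENNReal.coe_rpow_of_ne_zero hA₀]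
        ring
    _ = _ := by
        rw [mul_rpow_balance hd.ne' hp₀.ne' hdαp hR₀.ne' ht₀ balance, ← mul_assoc, mul_comm c]
        push_cast [ENNReal.coe_rpow_of_ne_zero ht₀, ENNReal.coe_rpow_of_ne_zero hA₀]
        rfl

theorem lintegral_lintegral_symm_le {X : Type*} [MeasurableSpace X] {ν : Measure X} [SFinite ν]
    {k : X → X → ℝ≥0∞} (hk : Measurable (Function.uncurry k)) (hk_symm : ∀ x y, k x y = k y x)
    {f : X → ℝ≥0∞} (hf : Measurable f) :
    ∫⁻ x, ∫⁻ y, k x y ∂ν ∂ν ≤ 2 * ∫⁻ x, ∫⁻ y in {y | f y ≤ f x}, k x y ∂ν ∂ν := by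
  let G (x y : X) : ℝ≥0∞ := {z : X × X | f z.2 ≤ f z.1}.indicator (Function.uncurry k) (x, y)
  have hG : Measurable (Function.uncurry G) :=
    hk.indicator (measurableSet_le (hf.comp measurable_snd) (hf.comp measurable_fst))
  have k_le (x y : X) : k x y ≤ G x y + G y x := by
    rcases le_total (f y) (f x) with h | h
    · simp [G, h]
    · simp [G, h, hk_symm x y]
  calc ∫⁻ x, ∫⁻ y, k x y ∂ν ∂ν
      ≤ ∫⁻ x, ∫⁻ y, (G x y + G y x) ∂ν ∂ν := by gcongr; exact k_le _ _
    _ = ∫⁻ x, ∫⁻ y, G x y ∂ν ∂ν + ∫⁻ x, ∫⁻ y, G y x ∂ν ∂ν := by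
      simp_rw [lintegral_add_left (hG.of_uncurry_left)]
      exact lintegral_add_left hG.lintegral_prod_right' _
    _ = 2 * ∫⁻ x, ∫⁻ y, G x y ∂ν ∂ν := by
      rw [lintegral_lintegral_swap (f := fun x y => G y x) (hG.comp measurable_swap).aemeasurable,
        two_mul]
    _ = 2 * ∫⁻ x, ∫⁻ y in {y | f y ≤ f x}, k x y ∂ν ∂ν := by
      simp_rw [← lintegral_indicator (measurableSet_le hf measurable_const)]
      rfl

variable (μ) in
theorem exists_setLIntegral_enorm_sub_rpow_mul_le {α : ℝ} (hα : 0 < α) (hα' : α < finrank ℝ E) :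
    ∃ K : ℝ≥0, ∀ f : E → ℝ≥0∞, Measurable f → ∀ A : ℝ≥0∞, A ≠ 0 → A ≠ ∞ →
        ∫⁻ x, f x ^ (2 * finrank ℝ E / (finrank ℝ E + α)) ∂μ ≤ A → ∀ x, f x ≠ ∞ →
      ∫⁻ y in {y | f y ≤ f x}, ‖x - y‖ₑ ^ (α - finrank ℝ E) * f y * f x ∂μ ≤
        K * (A ^ (α / finrank ℝ E) * f x ^ (2 * finrank ℝ E / (finrank ℝ E + α))) := by
  have hd : (0 : ℝ) < finrank ℝ E := hα.trans hα'
  obtain ⟨K, hK⟩ := exists_mul_lintegral_enorm_rpow_mul_le μ hα hα'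
  refine ⟨K, fun f hf A hA₀ hA hfA x hx => ?_⟩
  have hset : MeasurableSet {y | f y ≤ f x} := measurableSet_le hf measurable_const
  let g : E → ℝ≥0∞ := {y | f y ≤ f x}.indicator f
  have hg : Measurable g := hf.indicator hset
  have g_le (z : E) : g (x - z) ≤ f x := indicator_le' (fun _ h => h) (by simp) _
  have g_pow : ∫⁻ z, g (x - z) ^ (2 * finrank ℝ E / (finrank ℝ E + α)) ∂μ ≤ A := by
    rw [lintegral_sub_left_eq_self (fun y => g y ^ (2 * finrank ℝ E / (finrank ℝ E + α)))]
    refine (lintegral_mono fun y => ?_).trans hfA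
    exact ENNReal.rpow_le_rpow (indicator_le_self _ _ _) (by positivity)
  calc ∫⁻ y in {y | f y ≤ f x}, ‖x - y‖ₑ ^ (α - finrank ℝ E) * f y * f x ∂μ
      = f x * ∫⁻ y, ‖x - y‖ₑ ^ (α - finrank ℝ E) * g y ∂μ := by
        rw [lintegral_mul_const _ (by fun_prop), mul_comm, ← lintegral_indicator hset]
        simp only [g, indicator_mul_right]
    _ = f x * ∫⁻ z, ‖z‖ₑ ^ (α - finrank ℝ E) * g (x - z) ∂μ := by
        rw [← lintegral_sub_left_eq_self _ x]
        simp only [sub_sub_cancel]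
    _ ≤ K * (A ^ (α / finrank ℝ E) * f x ^ (2 * finrank ℝ E / (finrank ℝ E + α))) :=
        hK _ (hg.comp (measurable_const.sub measurable_id)) _ hx g_le A hA₀ hA g_pow

variable (μ) in
theorem hardyLittlewoodSobolev_diagonal {α : ℝ} (hα : 0 < α) (hα' : α < finrank ℝ E) :
    ∃ K : ℝ≥0, ∀ f : E → ℝ≥0∞, Measurable f →
      ∫⁻ x, ∫⁻ y, ‖x - y‖ₑ ^ (α - finrank ℝ E) * f y * f x ∂μ ∂μ ≤
        K * (∫⁻ x, f x ^ (2 * finrank ℝ E / (finrank ℝ E + α)) ∂μ) ^ (1 + α / finrank ℝ E) := by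
  set d : ℝ := (finrank ℝ E : ℝ)
  have hd : 0 < d := hα.trans hα'
  set p : ℝ := 2 * d / (d + α)
  have hp : 0 < p := by positivity
  obtain ⟨K, hK⟩ := exists_setLIntegral_enorm_sub_rpow_mul_le μ hα hα'
  refine ⟨2 * K + 1, fun f hf => ?_⟩
  set A : ℝ≥0∞ := ∫⁻ x, f x ^ p ∂μ with hA
  rcases eq_or_ne A 0 with hA₀ | hA₀
  · have f_ae_zero : ∀ᵐ x ∂μ, ∫⁻ y, ‖x - y‖ₑ ^ (α - d) * f y * f x ∂μ = 0 := by
      filter_upwards [(lintegral_eq_zero_iff (hf.pow_const p)).1 hA₀] with x hx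
      simp [(ENNReal.rpow_eq_zero_iff_of_pos hp).1 hx]
    simp [lintegral_congr_ae f_ae_zero]
  rcases eq_or_ne A ∞ with hA_top | hA_top
  · rw [hA_top, ENNReal.top_rpow_of_pos (by positivity), ENNReal.mul_top (by simp)]
    exact le_top
  have truncated : ∀ᵐ x ∂μ, ∫⁻ y in {y | f y ≤ f x}, ‖x - y‖ₑ ^ (α - d) * f y * f x ∂μ ≤
      K * (A ^ (α / d) * f x ^ p) := by
    filter_upwards [ae_lt_top (hf.pow_const p) hA_top] with x hx
    exact hK f hf A hA₀ hA_top le_rfl x ((ENNReal.rpow_lt_top_iff_of_pos hp).1 hx).ne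
  calc ∫⁻ x, ∫⁻ y, ‖x - y‖ₑ ^ (α - d) * f y * f x ∂μ ∂μ
      ≤ 2 * ∫⁻ x, ∫⁻ y in {y | f y ≤ f x}, ‖x - y‖ₑ ^ (α - d) * f y * f x ∂μ ∂μ :=
        lintegral_lintegral_symm_le (by fun_prop)
          (fun x y => by rw [enorm_sub_rev, mul_right_comm]) hf
    _ ≤ 2 * ∫⁻ x, K * (A ^ (α / d) * f x ^ p) ∂μ := by
        gcongr 2 * ?_
        exact lintegral_mono_ae truncated
    _ = 2 * K * A ^ (1 + α / d) := by
        rw [lintegral_const_mul _ (by fun_prop), lintegral_const_mul _ (by fun_prop), ← hA,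
          ENNReal.rpow_add _ _ hA₀ hA_top, ENNReal.rpow_one]
        ring
    _ ≤ ↑(2 * K + 1) * A ^ (1 + α / d) := by
        push_cast
        exact mul_le_mul_left le_self_add _

end RieszPotential

section RieszEnergy

variable {E : Type*} [NormedAddCommGroup E] [NormedSpace ℝ E] [FiniteDimensional ℝ E]
  [MeasurableSpace E] [BorelSpace E] {μ : Measure E}

/-- The Riesz potential energy `∫ (I_α * f) f`, where the normalising constant `c` of the kernel
`I_α(x) = c |x|^(α - d)` is left free; both integrals are Bochner integrals, hence `0` where they
diverge. -/
noncomputable def rieszEnergy (μ : Measure E) (c α : ℝ) (f : E → ℝ) : ℝ :=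
  ∫ x, (∫ y, c * ‖x - y‖ ^ (α - finrank ℝ E) * f y ∂μ) * f x ∂μ

theorem enorm_norm_rpow_le {G : Type*} [NormedAddCommGroup G] (x : G) (s : ℝ) :
    ‖‖x‖ ^ s‖ₑ ≤ ‖x‖ₑ ^ s := by
  rcases eq_or_ne x 0 with rfl | hx
  · rcases lt_or_ge s 0 with hs | hs
    · simp [ENNReal.zero_rpow_of_neg hs]
    · simp [Real.enorm_rpow_of_nonneg le_rfl hs]
  · rw [Real.enorm_of_nonneg (by positivity), ← ENNReal.ofReal_rpow_of_pos (norm_pos_iff.2 hx),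
      ofReal_norm]

theorem enorm_rieszEnergy_le (c α : ℝ) {f : E → ℝ} (hf : Measurable f) :
    ‖rieszEnergy μ c α f‖ₑ ≤
      ‖c‖ₑ * ∫⁻ x, ∫⁻ y, ‖x - y‖ₑ ^ (α - finrank ℝ E) * ‖f y‖ₑ * ‖f x‖ₑ ∂μ ∂μ := by
  have potential_le (x : E) : ‖∫ y, c * ‖x - y‖ ^ (α - finrank ℝ E) * f y ∂μ‖ₑ ≤
      ‖c‖ₑ * ∫⁻ y, ‖x - y‖ₑ ^ (α - finrank ℝ E) * ‖f y‖ₑ ∂μ := by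
    rw [← lintegral_const_mul _ (by fun_prop)]
    refine (enorm_integral_le_lintegral_enorm _).trans (lintegral_mono fun y => ?_)
    rw [enorm_mul, enorm_mul, mul_assoc]
    gcongr
    exact enorm_norm_rpow_le _ _
  rw [← lintegral_const_mul' _ _ enorm_ne_top]
  refine (enorm_integral_le_lintegral_enorm _).trans (lintegral_mono fun x => ?_)
  rw [enorm_mul, lintegral_mul_const _ (by fun_prop), ← mul_assoc]
  gcongr
  exact potential_le x

theorem lintegral_enorm_comp_rpow_le {X : Type*} [MeasurableSpace X] {ν : Measure X}
    {F : ℝ → ℝ} {C a b p : ℝ} (ha : 0 ≤ a) (hb : 0 ≤ b) (hp : 1 ≤ p)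
    (hF : ∀ s, |F s| ≤ C * (|s| ^ a + |s| ^ b)) {u : X → ℝ} (hu : Measurable u) :
    ∫⁻ x, ‖F (u x)‖ₑ ^ p ∂ν ≤ ENNReal.ofReal C ^ p * 2 ^ (p - 1) *
      (∫⁻ x, ‖u x‖ₑ ^ (a * p) ∂ν + ∫⁻ x, ‖u x‖ₑ ^ (b * p) ∂ν) := by
  have hp₀ : 0 ≤ p := zero_le_one.trans hp
  have growth (s : ℝ) : ‖F s‖ₑ ≤ ENNReal.ofReal C * (‖s‖ₑ ^ a + ‖s‖ₑ ^ b) := by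
    rw [Real.enorm_eq_ofReal_abs, Real.enorm_eq_ofReal_abs,
      ENNReal.ofReal_rpow_of_nonneg (abs_nonneg s) ha,
      ENNReal.ofReal_rpow_of_nonneg (abs_nonneg s) hb,
      ← ENNReal.ofReal_add (by positivity) (by positivity), ← ENNReal.ofReal_mul' (by positivity)]
    exact ENNReal.ofReal_le_ofReal (hF s)
  rw [← lintegral_add_left (by fun_prop), ← lintegral_const_mul _ (by fun_prop)]
  refine lintegral_mono fun x => ?_
  calc ‖F (u x)‖ₑ ^ p ≤ (ENNReal.ofReal C * (‖u x‖ₑ ^ a + ‖u x‖ₑ ^ b)) ^ p := by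
        gcongr
        exact growth _
    _ ≤ ENNReal.ofReal C ^ p * (2 ^ (p - 1) * ((‖u x‖ₑ ^ a) ^ p + (‖u x‖ₑ ^ b) ^ p)) := by
        rw [ENNReal.mul_rpow_of_nonneg _ _ hp₀]
        gcongr
        exact ENNReal.rpow_add_le_mul_rpow_add_rpow _ _ hp
    _ = ENNReal.ofReal C ^ p * 2 ^ (p - 1) * (‖u x‖ₑ ^ (a * p) + ‖u x‖ₑ ^ (b * p)) := by
        rw [← ENNReal.rpow_mul, ← ENNReal.rpow_mul, mul_assoc]

variable [μ.IsAddHaarMeasure] {α : ℝ} {F : ℝ → ℝ} {C : ℝ}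

variable (μ) in
theorem exists_lintegral_enorm_comp_rpow_le (hd : 3 ≤ finrank ℝ E) (hα : 0 < α)
    (hα' : α < finrank ℝ E)
    (hgrowth : ∀ s, |F s| ≤ C * (|s| ^ (1 + α / finrank ℝ E) +
      |s| ^ ((finrank ℝ E + α) / (finrank ℝ E - 2)))) :
    ∃ M : ℝ≥0, ∀ u : E → ℝ, Differentiable ℝ u → MemLp u 2 μ → MemLp (fderiv ℝ u) 2 μ →
      ∫⁻ x, ‖F (u x)‖ₑ ^ (2 * finrank ℝ E / (finrank ℝ E + α)) ∂μ ≤ M * (∫⁻ x, ‖u x‖ₑ ^ 2 ∂μ +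
        (∫⁻ x, ‖fderiv ℝ u x‖ₑ ^ 2 ∂μ) ^ (finrank ℝ E / (finrank ℝ E - 2) : ℝ)) := by
  have hd' : (0 : ℝ) < finrank ℝ E - 2 := sub_pos.2 (by exact_mod_cast hd)
  obtain ⟨S, hS⟩ := exists_lintegral_enorm_rpow_le_fderiv (H := ℝ) μ one_le_two
    (by exact_mod_cast hd : (2 : ℝ≥0) < finrank ℝ E)
  simp only [NNReal.coe_ofNat, ENNReal.coe_ofNat, ENNReal.rpow_ofNat] at hS
  set d : ℝ := (finrank ℝ E : ℝ)
  have hd₀ : 0 < d := hα.trans hα'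
  set p : ℝ := 2 * d / (d + α) with hp
  have hp₁ : 1 ≤ p := by rw [hp, one_le_div (by positivity)]; linarith
  have low_exponent : (1 + α / d) * p = 2 := by
    rw [hp]
    field_simp
  have high_exponent : (d + α) / (d - 2) * p = 2 * d / (d - 2) := by
    rw [hp]
    field_simp
  have const_ne_top : ENNReal.ofReal C ^ p * 2 ^ (p - 1) ≠ ∞ := by
    have := sub_nonneg.2 hp₁
    finiteness
  lift (ENNReal.ofReal C ^ p * 2 ^ (p - 1) : ℝ≥0∞) to ℝ≥0 using const_ne_top with c hc
  refine ⟨c * max 1 S, fun u hu hu₂ hu'₂ => ?_⟩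
  calc ∫⁻ x, ‖F (u x)‖ₑ ^ p ∂μ
      ≤ c * (∫⁻ x, ‖u x‖ₑ ^ 2 ∂μ + ∫⁻ x, ‖u x‖ₑ ^ (2 * d / (d - 2)) ∂μ) := by
        simpa only [low_exponent, high_exponent, ← hc, ENNReal.rpow_two] using
          lintegral_enorm_comp_rpow_le (by positivity) (by positivity) hp₁ hgrowth
            hu.continuous.measurable
    _ ≤ c * (1 * ∫⁻ x, ‖u x‖ₑ ^ 2 ∂μ + S * (∫⁻ x, ‖fderiv ℝ u x‖ₑ ^ 2 ∂μ) ^ (d / (d - 2))) := by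
        grw [one_mul, hS u hu hu₂ hu'₂]
    _ ≤ c * (max 1 S * ∫⁻ x, ‖u x‖ₑ ^ 2 ∂μ +
          max 1 S * (∫⁻ x, ‖fderiv ℝ u x‖ₑ ^ 2 ∂μ) ^ (d / (d - 2))) := by
        gcongr
        exacts [by exact_mod_cast le_max_left 1 S, le_max_right 1 S]
    _ = _ := by
        push_cast
        ring

variable (μ) in
theorem exists_enorm_rieszEnergy_comp_le (c : ℝ) (hd : 3 ≤ finrank ℝ E) (hα : 0 < α)
    (hα' : α < finrank ℝ E) (hF : Measurable F)
    (hgrowth : ∀ s, |F s| ≤ C * (|s| ^ (1 + α / finrank ℝ E) +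
      |s| ^ ((finrank ℝ E + α) / (finrank ℝ E - 2)))) :
    ∃ L : ℝ≥0, ∀ u : E → ℝ, Differentiable ℝ u → MemLp u 2 μ → MemLp (fderiv ℝ u) 2 μ →
      ‖rieszEnergy μ c α (fun x => F (u x))‖ₑ ≤
        L * ((∫⁻ x, ‖u x‖ₑ ^ 2 ∂μ) ^ (1 + α / finrank ℝ E) +
          (∫⁻ x, ‖fderiv ℝ u x‖ₑ ^ 2 ∂μ) ^ ((finrank ℝ E + α) / (finrank ℝ E - 2))) := by
  obtain ⟨K, hK⟩ := hardyLittlewoodSobolev_diagonal μ hα hα'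
  obtain ⟨M, hM⟩ := exists_lintegral_enorm_comp_rpow_le μ hd hα hα' hgrowth
  have hd' : (0 : ℝ) < finrank ℝ E - 2 := sub_pos.2 (by exact_mod_cast hd)
  set d : ℝ := (finrank ℝ E : ℝ)
  have hd₀ : 0 < d := hα.trans hα'
  set m : ℝ := 1 + α / d with hm
  have hm₁ : 1 ≤ m := le_add_of_nonneg_right (by positivity)
  have hm₀ : 0 ≤ m := zero_le_one.trans hm₁
  have exponent : d / (d - 2) * m = (d + α) / (d - 2) := by
    rw [hm]
    field_simp
  refine ⟨‖c‖₊ * (K * (M ^ m * 2 ^ (m - 1))), fun u hu hu₂ hu'₂ => ?_⟩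
  have hFu : Measurable fun x => F (u x) := hF.comp hu.continuous.measurable
  calc ‖rieszEnergy μ c α (fun x => F (u x))‖ₑ
      ≤ ‖c‖ₑ * ∫⁻ x, ∫⁻ y, ‖x - y‖ₑ ^ (α - d) * ‖F (u y)‖ₑ * ‖F (u x)‖ₑ ∂μ ∂μ :=
        enorm_rieszEnergy_le c α hFu
    _ ≤ ‖c‖ₑ * (K * (∫⁻ x, ‖F (u x)‖ₑ ^ (2 * d / (d + α)) ∂μ) ^ m) := by
        gcongr
        exact hK _ hFu.enorm
    _ ≤ ‖c‖ₑ * (K * (M * (∫⁻ x, ‖u x‖ₑ ^ 2 ∂μ +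
          (∫⁻ x, ‖fderiv ℝ u x‖ₑ ^ 2 ∂μ) ^ (d / (d - 2)))) ^ m) := by
        grw [hM u hu hu₂ hu'₂]
    _ ≤ ‖c‖ₑ * (K * (M ^ m * (2 ^ (m - 1) * ((∫⁻ x, ‖u x‖ₑ ^ 2 ∂μ) ^ m +
          ((∫⁻ x, ‖fderiv ℝ u x‖ₑ ^ 2 ∂μ) ^ (d / (d - 2))) ^ m)))) := by
        rw [ENNReal.mul_rpow_of_nonneg _ _ hm₀]
        grw [ENNReal.rpow_add_le_mul_rpow_add_rpow _ _ hm₁]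
    _ = _ := by
        rw [← ENNReal.rpow_mul, exponent]
        push_cast [ENNReal.coe_rpow_of_nonneg _ hm₀, ENNReal.coe_rpow_of_ne_zero two_ne_zero,
          enorm_eq_nnnorm]
        ring

theorem lintegral_enorm_sq_eq_ofReal {X G : Type*} [MeasurableSpace X] {ν : Measure X}
    [NormedAddCommGroup G] {f : X → G} (hf : Integrable (fun x => ‖f x‖ ^ 2) ν) :
    ∫⁻ x, ‖f x‖ₑ ^ 2 ∂ν = ENNReal.ofReal (∫ x, ‖f x‖ ^ 2 ∂ν) := by
  rw [ofReal_integral_eq_lintegral_ofReal hf (.of_forall fun x => sq_nonneg _)]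
  simp only [ENNReal.ofReal_pow (norm_nonneg _), ofReal_norm]

variable (μ) in
theorem exists_rieszEnergy_comp_le (c : ℝ) (hd : 3 ≤ finrank ℝ E) (hα : 0 < α)
    (hα' : α < finrank ℝ E) (hF : Measurable F)
    (hgrowth : ∀ s, |F s| ≤ C * (|s| ^ (1 + α / finrank ℝ E) +
      |s| ^ ((finrank ℝ E + α) / (finrank ℝ E - 2)))) :
    ∃ C' > (0 : ℝ), ∀ u : E → ℝ, Differentiable ℝ u →
      Integrable (fun x => ‖fderiv ℝ u x‖ ^ 2) μ → Integrable (fun x => u x ^ 2) μ →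
      rieszEnergy μ c α (fun x => F (u x)) ≤ C' * ((∫ x, u x ^ 2 ∂μ) ^ (1 + α / finrank ℝ E) +
        (∫ x, ‖fderiv ℝ u x‖ ^ 2 ∂μ) ^ ((finrank ℝ E + α) / (finrank ℝ E - 2))) := by
  obtain ⟨L, hL⟩ := exists_enorm_rieszEnergy_comp_le μ c hd hα hα' hF hgrowth
  have hd' : (0 : ℝ) < finrank ℝ E - 2 := sub_pos.2 (by exact_mod_cast hd)
  refine ⟨L + 1, by positivity, fun u hu hu' hu₂ => ?_⟩
  have hu'_meas : AEStronglyMeasurable (fderiv ℝ u) μ :=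
    (measurable_fderiv ℝ u).aestronglyMeasurable
  have bound := hL u hu
    ((memLp_two_iff_integrable_sq hu.continuous.aestronglyMeasurable).2 hu₂)
    ((memLp_two_iff_integrable_sq_norm hu'_meas).2 hu')
  simp only [← Real.norm_eq_abs, ← sq_abs (u _)] at hu₂ ⊢
  have ha : 0 ≤ ∫ x, ‖u x‖ ^ 2 ∂μ := by positivity
  have hb : 0 ≤ ∫ x, ‖fderiv ℝ u x‖ ^ 2 ∂μ := by positivity
  rw [lintegral_enorm_sq_eq_ofReal hu₂, lintegral_enorm_sq_eq_ofReal hu',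
    ENNReal.ofReal_rpow_of_nonneg ha (by positivity),
    ENNReal.ofReal_rpow_of_nonneg hb (by positivity),
    ← ENNReal.ofReal_add (by positivity) (by positivity), ← ENNReal.ofReal_coe_nnreal,
    ← ENNReal.ofReal_mul L.coe_nonneg, Real.enorm_eq_ofReal_abs,
    ENNReal.ofReal_le_ofReal_iff (by positivity)] at bound
  refine (le_abs_self _).trans (bound.trans ?_)
  gcongr
  exact le_add_of_nonneg_right zero_le_one

end RieszEnergy

theorem eventually_mul_rpow_le_mul (C : ℝ) {z ε : ℝ} (hz : 1 < z) (hε : 0 < ε) :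
    ∀ᶠ a in 𝓝[≥] (0 : ℝ), C * a ^ z ≤ ε * a := by
  have hz' : 0 < z - 1 := sub_pos.2 hz
  have vanishing : Tendsto (fun a : ℝ => C * a ^ (z - 1)) (𝓝[≥] 0) (𝓝 0) := by
    have := (Real.continuousAt_rpow_const 0 (z - 1) (.inr hz'.le)).tendsto.const_mul C
    rw [Real.zero_rpow hz'.ne', mul_zero] at this
    exact this.mono_left nhdsWithin_le_nhds
  filter_upwards [vanishing.eventually_le_const hε, self_mem_nhdsWithin] with a hle (ha : 0 ≤ a)
  calc C * a ^ z = C * a ^ (z - 1) * a := by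
        rw [mul_assoc, ← Real.rpow_add_one' ha
          (by simpa using (one_pos.trans hz).ne'), sub_add_cancel]
    _ ≤ ε * a := mul_le_mul_of_nonneg_right hle ha

theorem exists_forall_mul_rpow_add_rpow_le (C : ℝ) {m r ε : ℝ} (hm : 1 < m) (hr : 1 < r)
    (hε : 0 < ε) :
    ∃ δ > (0 : ℝ), ∀ a b : ℝ, 0 ≤ a → 0 ≤ b → b + a ≤ δ →
      C * (a ^ m + b ^ r) ≤ ε * (b + a) := by
  obtain ⟨δ, hδ, small⟩ := mem_nhdsGE_iff_exists_Icc_subset.1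
    ((eventually_mul_rpow_le_mul C hm hε).and (eventually_mul_rpow_le_mul C hr hε))
  refine ⟨δ, hδ, fun a b ha hb hab => ?_⟩
  have ha_small : C * a ^ m ≤ ε * a := (small ⟨ha, by linarith⟩).1
  have hb_small : C * b ^ r ≤ ε * b := (small ⟨hb, by linarith⟩).2
  linarith

end Choquard

open Module Choquard in
theorem choquard_mountain_pass_geometry_general {E : Type*} [NormedAddCommGroup E]
    [NormedSpace ℝ E] [FiniteDimensional ℝ E] [MeasurableSpace E] [BorelSpace E]
    (μ : Measure E) [μ.IsAddHaarMeasure] (c : ℝ) (hd : 3 ≤ finrank ℝ E) {α : ℝ} (hα : 0 < α)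
    (hα' : α < finrank ℝ E) {F : ℝ → ℝ} (hF : Measurable F) {C : ℝ}
    (hgrowth : ∀ s, |F s| ≤ C * (|s| ^ (1 + α / finrank ℝ E) +
      |s| ^ ((finrank ℝ E + α) / (finrank ℝ E - 2)))) :
    (∃ C' > (0 : ℝ), ∀ u : E → ℝ, Differentiable ℝ u →
      Integrable (fun x => ‖fderiv ℝ u x‖ ^ 2) μ → Integrable (fun x => u x ^ 2) μ →
      rieszEnergy μ c α (fun x => F (u x)) ≤ C' * ((∫ x, u x ^ 2 ∂μ) ^ (1 + α / finrank ℝ E) +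
        (∫ x, ‖fderiv ℝ u x‖ ^ 2 ∂μ) ^ ((finrank ℝ E + α) / (finrank ℝ E - 2)))) ∧
    ∃ δ > (0 : ℝ), ∀ u : E → ℝ, Differentiable ℝ u →
      Integrable (fun x => ‖fderiv ℝ u x‖ ^ 2) μ → Integrable (fun x => u x ^ 2) μ →
      ∫ x, ‖fderiv ℝ u x‖ ^ 2 ∂μ + ∫ x, u x ^ 2 ∂μ ≤ δ →
      rieszEnergy μ c α (fun x => F (u x)) ≤
          1 / 4 * (∫ x, ‖fderiv ℝ u x‖ ^ 2 ∂μ + ∫ x, u x ^ 2 ∂μ) ∧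
        1 / 4 * (∫ x, ‖fderiv ℝ u x‖ ^ 2 ∂μ + ∫ x, u x ^ 2 ∂μ) ≤
          1 / 2 * (∫ x, ‖fderiv ℝ u x‖ ^ 2 ∂μ + ∫ x, u x ^ 2 ∂μ) -
            1 / 2 * rieszEnergy μ c α (fun x => F (u x)) := by
  have hd₂ : (0 : ℝ) < finrank ℝ E - 2 := sub_pos.2 (by exact_mod_cast hd)
  have low_exponent : 1 < 1 + α / finrank ℝ E := lt_add_of_pos_right 1 (div_pos hα (hα.trans hα'))
  have high_exponent : 1 < (finrank ℝ E + α) / (finrank ℝ E - 2) := by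
    rw [one_lt_div hd₂]
    linarith
  obtain ⟨C', hC', energy_le⟩ := exists_rieszEnergy_comp_le μ c hd hα hα' hF hgrowth
  obtain ⟨δ, hδ, superquadratic⟩ := exists_forall_mul_rpow_add_rpow_le C' low_exponent
    high_exponent (by norm_num : (0 : ℝ) < 1 / 4)
  refine ⟨⟨C', hC', energy_le⟩, δ, hδ, fun u hu hu' hu₂ small => ?_⟩
  have sq_norm_nonneg : 0 ≤ ∫ x, ‖fderiv ℝ u x‖ ^ 2 ∂μ + ∫ x, u x ^ 2 ∂μ := by positivity
  have quarter := (energy_le u hu hu' hu₂).trans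
    (superquadratic _ _ (by positivity) (by positivity) small)
  exact ⟨quarter, by linarith⟩

/-- Mountain-pass geometry for the Choquard functional: the growth bound `(F₁)` combined
with the Hardy–Littlewood–Sobolev and Sobolev inequalities bounds the nonlocal term by
`C'((∫|u|²)^(1+α/N) + (∫|∇u|²)^((N+α)/(N-2)))`; consequently, on a small ball
`‖u‖²_{H¹} ≤ δ` the nonlocal term is at most `¼‖u‖²_{H¹}` and `I(u) ≥ ¼‖u‖²_{H¹}`. -/
theorem choquard_mountain_pass_geometry
    (N : ℕ) (hN : 3 ≤ N) (α : ℝ) (hα : 0 < α) (hαN : α < N)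
    (F : ℝ → ℝ) (hFcont : Continuous F) (C : ℝ) (hC : 0 < C)
    (hgrowth : ∀ s : ℝ, |F s| ≤ C * (|s| ^ (1 + α / N) + |s| ^ (((N : ℝ) + α) / ((N : ℝ) - 2)))) :
    (∃ C' > (0 : ℝ), ∀ u : EuclideanSpace ℝ (Fin N) → ℝ,
      Differentiable ℝ u →
      Integrable (fun x => ‖fderiv ℝ u x‖ ^ 2) volume →
      Integrable (fun x => (u x) ^ 2) volume →
      (∫ x, (∫ y, (Real.Gamma (((N : ℝ) - α) / 2) /
          (Real.Gamma (α / 2) * Real.pi ^ ((N : ℝ) / 2) * 2 ^ α)) *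
          ‖x - y‖ ^ (α - (N : ℝ)) * F (u y)) * F (u x))
        ≤ C' * ((∫ x, (u x) ^ 2) ^ (1 + α / N)
            + (∫ x, ‖fderiv ℝ u x‖ ^ 2) ^ (((N : ℝ) + α) / ((N : ℝ) - 2))))
    ∧ (∃ δ > (0 : ℝ), ∀ u : EuclideanSpace ℝ (Fin N) → ℝ,
      Differentiable ℝ u →
      Integrable (fun x => ‖fderiv ℝ u x‖ ^ 2) volume →
      Integrable (fun x => (u x) ^ 2) volume →
      (∫ x, ‖fderiv ℝ u x‖ ^ 2) + (∫ x, (u x) ^ 2) ≤ δ →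
      (∫ x, (∫ y, (Real.Gamma (((N : ℝ) - α) / 2) /
          (Real.Gamma (α / 2) * Real.pi ^ ((N : ℝ) / 2) * 2 ^ α)) *
          ‖x - y‖ ^ (α - (N : ℝ)) * F (u y)) * F (u x))
        ≤ 1 / 4 * ((∫ x, ‖fderiv ℝ u x‖ ^ 2) + (∫ x, (u x) ^ 2))
      ∧ 1 / 4 * ((∫ x, ‖fderiv ℝ u x‖ ^ 2) + (∫ x, (u x) ^ 2))
        ≤ 1 / 2 * ((∫ x, ‖fderiv ℝ u x‖ ^ 2) + (∫ x, (u x) ^ 2))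
          - 1 / 2 * (∫ x, (∫ y, (Real.Gamma (((N : ℝ) - α) / 2) /
              (Real.Gamma (α / 2) * Real.pi ^ ((N : ℝ) / 2) * 2 ^ α)) *
              ‖x - y‖ ^ (α - (N : ℝ)) * F (u y)) * F (u x))) := by
  simpa only [Choquard.rieszEnergy, finrank_euclideanSpace_fin] using
    choquard_mountain_pass_geometry_general (E := EuclideanSpace ℝ (Fin N)) volume
      (Real.Gamma ((N - α) / 2) / (Real.Gamma (α / 2) * Real.pi ^ ((N : ℝ) / 2) * 2 ^ α))
      (by simpa using hN) hα (by simpa using hαN) hFcont.measurable (by simpa using hgrowth)
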